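/- The Hilbert function of the graded ring of invariants of 8 points on P¹ (with democratic linearization), namely R_k = H⁰((P¹)⁸, O(k,...,k))^{SL(2)}, is f(k) = (k⁵ + 5k⁴ + 11k³ + 13k² + 9k + 3)/3, and its Hilbert series equals (1 + 8t + 22t² + 8t³ + t⁴)/(1−t)⁶. -/

import Mathlib

open MvPolynomial

/-- The action of a `2×2` matrix `g` on polynomial functions of 8 points on `P¹` (8 pairs of
binary variables, the pair indexed by `i : Fin 8` being the homogeneous coordinates of the
`i`-th point): each variable `X (i, a)` is sent to `∑ b, g a b • X (i, b)`. -/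
noncomputable def sl2Sub {k : Type*} [CommSemiring k] (g : Matrix (Fin 2) (Fin 2) k) :
    MvPolynomial (Fin 8 × Fin 2) k →ₐ[k] MvPolynomial (Fin 8 × Fin 2) k :=
  aeval fun p : Fin 8 × Fin 2 => ∑ b : Fin 2, C (g p.2 b) * X (p.1, b)

/-- The degree-`d` piece of the graded ring of invariants of 8 points on `P¹` (with the
democratic linearization): `SL(2)`-invariant polynomials in the 8 pairs of binary variables
that are multihomogeneous of multidegree `(d, …, d)`. -/
noncomputable def invariants8 (k : Type*) [CommRing k] (d : ℕ) :
    Submodule k (MvPolynomial (Fin 8 × Fin 2) k) :=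
  (⨅ g : Matrix.SpecialLinearGroup (Fin 2) k,
      LinearMap.eqLocus (sl2Sub (g : Matrix (Fin 2) (Fin 2) k)).toLinearMap LinearMap.id) ⊓
  weightedHomogeneousSubmodule k (fun p : Fin 8 × Fin 2 => Pi.single p.1 1)
    (fun _ : Fin 8 => d)


section Sl2
variable {k V : Type*} [Field k] [AddCommGroup V] [Module k V]

theorem sl2_iter (E F : V →ₗ[k] V) (W : ℤ → Submodule k V)
    (hE : ∀ m, ∀ v ∈ W m, E v ∈ W (m + 2))
    (hc : ∀ m, ∀ v ∈ W m, E (F v) = F (E v) + (m : k) • v)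
    (m : ℤ) (w : V) (hw : w ∈ W m) (n : ℕ) :
    (E^[n] w ∈ W (m + 2 * n)) ∧
    E^[n + 1] (F w) = F (E^[n + 1] w) + (((n + 1) * (m + n) : ℤ) : k) • E^[n] w := by
  induction n with
  | zero => simpa using ⟨hw, hc m w hw⟩
  | succ n ih =>
    have h1 : E^[n + 1] w ∈ W (m + 2 * (n + 1 : ℕ)) := by
      rw [Function.iterate_succ_apply']
      have := hE _ _ ih.1
      convert this using 2
      push_cast; ring
    refine ⟨h1, ?_⟩
    rw [Function.iterate_succ_apply', ih.2, map_add, map_smul, hc _ _ h1,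
      ← Function.iterate_succ_apply' (f := E), ← Function.iterate_succ_apply' (f := E),
      add_assoc, ← add_smul]
    congr 2
    push_cast; ring

theorem sl2_surj [CharZero k] (E F : V →ₗ[k] V) (W : ℤ → Submodule k V)
    (hE : ∀ m, ∀ v ∈ W m, E v ∈ W (m + 2))
    (hF : ∀ m, ∀ v ∈ W m, F v ∈ W (m - 2))
    (hc : ∀ m, ∀ v ∈ W m, E (F v) = F (E v) + (m : k) • v)
    (m : ℤ) (hm : 0 < m) (n : ℕ) : ∀ w ∈ W m, E^[n] w = 0 → ∃ v ∈ W (m - 2), E v = w := by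
  induction n with
  | zero => intro w _ h0; exact ⟨0, zero_mem _, by simpa using h0.symm⟩
  | succ n ih =>
    intro w hw h0
    have h := (sl2_iter E F W hE hc m w hw n).2
    rw [h0, map_zero, zero_add] at h
    set c : k := (((n + 1) * (m + n) : ℤ) : k) with hcdef
    have hc0 : c ≠ 0 := by
      rw [hcdef, Int.cast_ne_zero]; positivity
    have hEF : E (F w) ∈ W m := by
      have := hE _ _ (hF _ _ hw); simpa using this
    obtain ⟨v, hv, hv'⟩ := ih (w - c⁻¹ • E (F w)) (sub_mem hw ((W m).smul_mem _ hEF)) (by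
      rw [← Module.End.pow_apply, map_sub, map_smul, Module.End.pow_apply, Module.End.pow_apply,
        ← Function.iterate_succ_apply, h, smul_smul, inv_mul_cancel₀ hc0, one_smul, sub_self])
    refine ⟨v + c⁻¹ • F w, add_mem hv ((W _).smul_mem _ (hF _ _ hw)), ?_⟩
    rw [map_add, map_smul, hv', sub_add_cancel]

theorem sl2_inj [CharZero k] (E F : V →ₗ[k] V) (W : ℤ → Submodule k V)
    (hE : ∀ m, ∀ v ∈ W m, E v ∈ W (m + 2))
    (hc : ∀ m, ∀ v ∈ W m, E (F v) = F (E v) + (m : k) • v)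
    (m : ℤ) (hm : 0 < m) (w : V) (hw : w ∈ W m) (hFw : F w = 0) (n : ℕ) : 
    E^[n] w = 0 → w = 0 := by
  induction n with
  | zero => exact fun h => h
  | succ n ih =>
    intro h0
    have h := (sl2_iter E F W hE hc m w hw n).2
    have z : E^[n + 1] (0 : V) = 0 := by rw [← Module.End.pow_apply, map_zero]
    rw [h0, map_zero, zero_add, hFw, z] at h
    apply ih
    refine (smul_eq_zero.mp h.symm).resolve_left ?_
    rw [← ne_eq, Int.cast_ne_zero]; positivity
end Sl2

section Counting

theorem count_formula (d j : ℕ) :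
    (((Fintype.piFinset fun _ : Fin 8 => Finset.range (d + 1)).filter
      fun a => ∑ i, a i = j).card : ℤ) =
    PowerSeries.coeff j ((1 - PowerSeries.X ^ (d + 1) : PowerSeries ℤ) ^ 8 *
      PowerSeries.mk fun n => (((7 + n).choose 7 : ℕ) : ℤ)) := by
  have h1 : (∑ a ∈ Finset.range (d + 1), (PowerSeries.X : PowerSeries ℤ) ^ a) ^ 8 =
      (1 - PowerSeries.X ^ (d + 1) : PowerSeries ℤ) ^ 8 *
      PowerSeries.mk fun n => (((7 + n).choose 7 : ℕ) : ℤ) := by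
    have h2 := PowerSeries.mk_add_choose_mul_one_sub_pow_eq_one ℤ 7
    have h3 := mul_neg_geom_sum (PowerSeries.X : PowerSeries ℤ) (d + 1)
    rw [← h3, mul_pow, mul_right_comm, mul_comm ((1 - PowerSeries.X : PowerSeries ℤ) ^ 8), h2,
      one_mul]
  rw [← h1]
  have h4 : (∑ a ∈ Finset.range (d + 1), (PowerSeries.X : PowerSeries ℤ) ^ a) ^ 8 =
     ∏ i : Fin 8, ∑ a ∈ Finset.range (d + 1), (PowerSeries.X : PowerSeries ℤ) ^ a := by
    simp
  rw [h4, Finset.prod_univ_sum, map_sum, Finset.card_filter]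
  push_cast
  refine Finset.sum_congr rfl fun a _ => ?_
  rw [Finset.prod_pow_eq_pow_sum, PowerSeries.coeff_X_pow]
  simp [eq_comm]

theorem choose7 (n : ℕ) : (5040 : ℤ) * ((n + 7).choose 7 : ℕ) =
    (n+1)*(n+2)*(n+3)*(n+4)*(n+5)*(n+6)*(n+7) := by
  have h := Nat.ascFactorial_eq_factorial_mul_choose n 7
  have h7 : Nat.factorial 7 = 5040 := by decide
  simp only [Nat.ascFactorial, h7] at h
  zify at h
  linarith

theorem choose7' (n m : ℕ) : (5040 : ℤ) * ((n + m).choose 7 : ℕ) =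
    (n+m-6:ℤ)*(n+m-5)*(n+m-4)*(n+m-3)*(n+m-2)*(n+m-1)*(n+m) := by
  by_cases h : 7 ≤ n + m
  · obtain ⟨q, hq⟩ := Nat.exists_eq_add_of_le' h
    have : (n : ℤ) + m = q + 7 := by exact_mod_cast hq
    rw [hq, this, choose7]; ring
  · rw [Nat.choose_eq_zero_of_lt (by omega)]
    have : n + m ≤ 6 := by omega
    have h' : (n : ℤ) + m = ((n + m : ℕ) : ℤ) := by push_cast; rfl
    rw [h']
    generalize n + m = q at *
    interval_cases q <;> simp

theorem coeff_expand (d j : ℕ) :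
    PowerSeries.coeff j ((1 - PowerSeries.X ^ (d + 1) : PowerSeries ℤ) ^ 8 *
      PowerSeries.mk fun n => (((7 + n).choose 7 : ℕ) : ℤ)) =
    ∑ i ∈ Finset.range 9, (-1) ^ i * (Nat.choose 8 i : ℤ) *
      if i * (d + 1) ≤ j then (((7 + (j - i * (d + 1))).choose 7 : ℕ) : ℤ) else 0 := by
  have h : (1 - PowerSeries.X ^ (d + 1) : PowerSeries ℤ) ^ 8 =
    ∑ i ∈ Finset.range 9, PowerSeries.C ((-1) ^ i * (Nat.choose 8 i : ℤ)) *
      PowerSeries.X ^ (i * (d + 1)) := by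
    rw [sub_eq_neg_add, add_pow]
    refine Finset.sum_congr rfl fun i _ => ?_
    rw [neg_pow, ← pow_mul, mul_comm (d + 1) i]
    simp
    ring
  rw [h, Finset.sum_mul, map_sum]
  refine Finset.sum_congr rfl fun i _ => ?_
  rw [mul_assoc, PowerSeries.coeff_C_mul, PowerSeries.coeff_X_pow_mul']
  simp

theorem choose7r (d a b : ℕ) : (5040 : ℤ) * ((a * d + b).choose 7 : ℕ) =
    (a*d+b-6:ℤ)*(a*d+b-5)*(a*d+b-4)*(a*d+b-3)*(a*d+b-2)*(a*d+b-1)*(a*d+b) := by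
  have := choose7' (a * d + b) 0
  push_cast at this
  simpa using this

theorem ite_choose (x i D : ℕ) (h : i * D ≤ x + 7) : (if i * D ≤ x then (((7 + (x - i * D)).choose 7 : ℕ) : ℤ) else 0)
    = ((x + 7 - i * D).choose 7 : ℕ) := by
  split_ifs with h1
  · congr 2; omega
  · rw [Nat.choose_eq_zero_of_lt (by omega)]; simp

theorem count_diff (d : ℕ) :
    3 * ((((Fintype.piFinset fun _ : Fin 8 => Finset.range (d + 1)).filter
      fun a => ∑ i, a i = 4 * d).card : ℤ) -
    (((Fintype.piFinset fun _ : Fin 8 => Finset.range (d + 1)).filter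
      fun a => ∑ i, a i = 4 * d + 1).card : ℤ)) =
     d ^ 5 + 5 * d ^ 4 + 11 * d ^ 3 + 13 * d ^ 2 + 9 * d + 3 := by
  rw [count_formula, count_formula, coeff_expand, coeff_expand]
  simp only [Finset.sum_range_succ, Finset.sum_range_zero]
  rw [if_neg (show ¬ 4 * (d + 1) ≤ 4 * d by omega), if_neg (show ¬ 5 * (d + 1) ≤ 4 * d by omega),
    if_neg (show ¬ 6 * (d + 1) ≤ 4 * d by omega), if_neg (show ¬ 7 * (d + 1) ≤ 4 * d by omega),
    if_neg (show ¬ 8 * (d + 1) ≤ 4 * d by omega),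
    if_neg (show ¬ 4 * (d + 1) ≤ 4 * d + 1 by omega),
    if_neg (show ¬ 5 * (d + 1) ≤ 4 * d + 1 by omega),
    if_neg (show ¬ 6 * (d + 1) ≤ 4 * d + 1 by omega),
    if_neg (show ¬ 7 * (d + 1) ≤ 4 * d + 1 by omega),
    if_neg (show ¬ 8 * (d + 1) ≤ 4 * d + 1 by omega)]
  rw [ite_choose _ 0 _ (by omega), ite_choose _ 1 _ (by omega), ite_choose _ 2 _ (by omega),
    ite_choose _ 3 _ (by omega), ite_choose _ 0 _ (by omega), ite_choose _ 1 _ (by omega),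
    ite_choose _ 2 _ (by omega), ite_choose _ 3 _ (by omega)]
  rw [show 4 * d + 7 - 0 * (d + 1) = 4 * d + 7 by omega,
    show 4 * d + 7 - 1 * (d + 1) = 3 * d + 6 by omega,
    show 4 * d + 7 - 2 * (d + 1) = 2 * d + 5 by omega,
    show 4 * d + 7 - 3 * (d + 1) = 1 * d + 4 by omega,
    show 4 * d + 1 + 7 - 0 * (d + 1) = 4 * d + 8 by omega,
    show 4 * d + 1 + 7 - 1 * (d + 1) = 3 * d + 7 by omega,
    show 4 * d + 1 + 7 - 2 * (d + 1) = 2 * d + 6 by omega,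
    show 4 * d + 1 + 7 - 3 * (d + 1) = 1 * d + 5 by omega]
  have e1 : Nat.choose 8 1 = 8 := by decide
  have e2 : Nat.choose 8 2 = 28 := by decide
  have e3 : Nat.choose 8 3 = 56 := by decide
  rw [e1, e2, e3]
  have a1 := choose7r d 4 7
  have a2 := choose7r d 3 6
  have a3 := choose7r d 2 5
  have a4 := choose7r d 1 4
  have b1 := choose7r d 4 8
  have b2 := choose7r d 3 7
  have b3 := choose7r d 2 6
  have b4 := choose7r d 1 5
  refine mul_left_cancel₀ (show (5040 : ℤ) ≠ 0 by norm_num) ?_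
  push_cast at *
  simp only [Nat.choose_zero_right, mul_zero, add_zero] at *
  push_cast
  linear_combination 3 * (a1 - 8 * a2 + 28 * a3 - 56 * a4 - (b1 - 8 * b2 + 28 * b3 - 56 * b4))

theorem choose5 (d b : ℕ) : (120 : ℤ) * ((d + b).choose 5 : ℕ) =
    (d+b-4:ℤ)*(d+b-3)*(d+b-2)*(d+b-1)*(d+b) := by
  by_cases h : 5 ≤ d + b
  · obtain ⟨q, hq⟩ := Nat.exists_eq_add_of_le' h
    have : (d : ℤ) + b = q + 5 := by exact_mod_cast hq
    rw [hq, this]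
    have h := Nat.ascFactorial_eq_factorial_mul_choose q 5
    have h7 : Nat.factorial 5 = 120 := by decide
    simp only [Nat.ascFactorial, h7] at h
    zify at h
    linarith
  · rw [Nat.choose_eq_zero_of_lt (by omega)]
    have : d + b ≤ 4 := by omega
    have h' : (d : ℤ) + b = ((d + b : ℕ) : ℤ) := by push_cast; rfl
    rw [h']
    generalize d + b = q at *
    interval_cases q <;> simp

theorem ite_choose5 (d i : ℕ) (h : i ≤ 5) : (if i ≤ d then (((5 + (d - i)).choose 5 : ℕ) : ℤ) else 0)
    = ((d + (5 - i)).choose 5 : ℕ) := by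
  split_ifs with h1
  · congr 2; omega
  · rw [Nat.choose_eq_zero_of_lt (by omega)]; simp

theorem series_formula (f : ℕ → ℕ)
    (hf : ∀ d, 3 * f d = d ^ 5 + 5 * d ^ 4 + 11 * d ^ 3 + 13 * d ^ 2 + 9 * d + 3) :
    (PowerSeries.mk (fun d : ℕ => (f d : ℤ))
        * (1 - PowerSeries.X) ^ 6
      = 1 + 8 * PowerSeries.X + 22 * PowerSeries.X ^ 2 + 8 * PowerSeries.X ^ 3
        + PowerSeries.X ^ 4) := by
  have h2 := PowerSeries.mk_add_choose_mul_one_sub_pow_eq_one ℤ 5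
  have key : PowerSeries.mk (fun d : ℕ => (f d : ℤ)) =
      (PowerSeries.C 1 * PowerSeries.X ^ 0 + PowerSeries.C 8 * PowerSeries.X ^ 1 +
        PowerSeries.C 22 * PowerSeries.X ^ 2 + PowerSeries.C 8 * PowerSeries.X ^ 3
        + PowerSeries.C 1 * PowerSeries.X ^ 4) *
        PowerSeries.mk fun n => (((5 + n).choose 5 : ℕ) : ℤ) := by
    ext d
    simp only [add_mul, mul_assoc, map_add, PowerSeries.coeff_C_mul, PowerSeries.coeff_X_pow_mul',
      PowerSeries.coeff_mk]
    rw [ite_choose5 _ _ (by omega), ite_choose5 _ _ (by omega), ite_choose5 _ _ (by omega),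
      ite_choose5 _ _ (by omega), ite_choose5 _ _ (by omega)]
    have a0 := choose5 d (5 - 0)
    have a1 := choose5 d (5 - 1)
    have a2 := choose5 d (5 - 2)
    have a3 := choose5 d (5 - 3)
    have a4 := choose5 d (5 - 4)
    have hd := hf d
    zify at hd
    norm_num at a0 a1 a2 a3 a4 ⊢
    refine mul_left_cancel₀ (show (120 : ℤ) ≠ 0 by norm_num) ?_
    linear_combination 40 * hd - a0 - 8 * a1 - 22 * a2 - 8 * a3 - a4
  rw [key, mul_assoc, h2]
  simp
end Counting

section Derivs
variable (k : Type*) [Field k]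

/-- Diagonal derivation. -/
noncomputable def dDiag (c : Fin 8 × Fin 2 → k) :
    Derivation k (MvPolynomial (Fin 8 × Fin 2) k) (MvPolynomial (Fin 8 × Fin 2) k) :=
  mkDerivation k fun p => c p • X p

/-- The derivation `∑ᵢ X(i,a) ∂/∂X(i,b)`. -/
noncomputable def dNil (a b : Fin 2) :
    Derivation k (MvPolynomial (Fin 8 × Fin 2) k) (MvPolynomial (Fin 8 × Fin 2) k) :=
  mkDerivation k fun p => if p.2 = b then X (p.1, a) else 0

/-- Weight of `H`. -/
def hw (p : Fin 8 × Fin 2) : ℤ := if p.2 = 0 then 1 else -1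

/-- Multidegree weight. -/
def nw (i : Fin 8) (p : Fin 8 × Fin 2) : ℕ := if p.1 = i then 1 else 0

theorem dDiag_monomial (c : Fin 8 × Fin 2 → k) (s : Fin 8 × Fin 2 →₀ ℕ) (a : k) :
    dDiag k c (monomial s a) = (∑ p, (s p : k) * c p) • monomial s a := by
  classical
  have h1 : ∀ s : Fin 8 × Fin 2 →₀ ℕ, dDiag k c (monomial s 1) =
      (∑ p, (s p : k) * c p) • monomial s 1 := by
    intro s
    induction s using Finsupp.induction_linear with
    | zero => simp
    | add s t hs ht =>
      have : (monomial (s + t) (1 : k)) = monomial s 1 * monomial t 1 := by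
        simp [monomial_mul]
      rw [this, Derivation.leibniz, hs, ht]
      simp only [Finsupp.add_apply, Nat.cast_add, add_mul, Finset.sum_add_distrib, add_smul,
        smul_eq_mul, mul_smul_comm]
      rw [mul_comm (monomial t (1 : k)), add_comm]
    | single p n =>
      have : (monomial (Finsupp.single p n) (1 : k)) = X p ^ n := by
        rw [X_pow_eq_monomial]
      rw [this, Derivation.leibniz_pow, dDiag, mkDerivation_X]
      rw [Finset.sum_eq_single p]
      · cases n with
        | zero => simp
        | succ n =>
          simp only [Finsupp.single_eq_same, Nat.add_sub_cancel, smul_eq_mul, mul_smul_comm,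
            ← pow_succ, mul_smul]
          rw [Nat.cast_smul_eq_nsmul]
      · intro b _ hb
        simp [hb.symm]
      · simp
  have h2 : monomial s a = a • monomial s 1 := by simp [smul_monomial]
  rw [h2, Derivation.map_smul, h1, smul_comm]

theorem coeff_dDiag (c : Fin 8 × Fin 2 → k) (s : Fin 8 × Fin 2 →₀ ℕ)
    (f : MvPolynomial (Fin 8 × Fin 2) k) :
    coeff s (dDiag k c f) = (∑ p, (s p : k) * c p) * coeff s f := by
  classical
  induction f using MvPolynomial.induction_on' with
  | monomial t a =>
    rw [dDiag_monomial, coeff_smul, coeff_monomial, smul_eq_mul]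
    split_ifs with h
    · rw [h]
    · simp
  | add p q hp hq => rw [map_add, coeff_add, coeff_add, hp, hq, mul_add]

theorem dDiag_eq_iff (c : Fin 8 × Fin 2 → k) (r : k) (f : MvPolynomial (Fin 8 × Fin 2) k) :
    dDiag k c f = r • f ↔ ∀ s, coeff s f ≠ 0 → ∑ p, (s p : k) * c p = r := by
  rw [MvPolynomial.ext_iff]
  refine forall_congr' fun s => ?_
  rw [coeff_dDiag, coeff_smul, smul_eq_mul, mul_eq_mul_right_iff]
  tauto

/-- Weight space. -/
noncomputable def Wt (d : ℕ) (m : ℤ) : Submodule k (MvPolynomial (Fin 8 × Fin 2) k) where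
  carrier := {f | (∀ i, dDiag k (fun p => (nw i p : k)) f = (d : k) • f) ∧
    dDiag k (fun p => (hw p : k)) f = (m : k) • f}
  add_mem' := by
    rintro f g ⟨h1, h2⟩ ⟨h3, h4⟩
    exact ⟨fun i => by rw [map_add, h1, h3, smul_add], by rw [map_add, h2, h4, smul_add]⟩
  zero_mem' := by simp
  smul_mem' := by
    rintro c f ⟨h1, h2⟩
    exact ⟨fun i => by rw [Derivation.map_smul, h1, smul_comm], by rw [Derivation.map_smul, h2, smul_comm]⟩

theorem mem_Wt {d : ℕ} {m : ℤ} {f} : f ∈ Wt k d m ↔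
    (∀ i, dDiag k (fun p => (nw i p : k)) f = (d : k) • f) ∧
    dDiag k (fun p => (hw p : k)) f = (m : k) • f := Iff.rfl

/-- Exponents of weight m. -/
def expSet (d : ℕ) (m : ℤ) : Set (Fin 8 × Fin 2 →₀ ℕ) :=
  {s | (∀ i, s (i, 0) + s (i, 1) = d) ∧ ∑ i, ((s (i, 0) : ℤ) - s (i, 1)) = m}

theorem sum_nw (i : Fin 8) (s : Fin 8 × Fin 2 →₀ ℕ) :
    ∑ p, (s p : k) * (nw i p : k) = ((s (i, 0) + s (i, 1) : ℕ) : k) := by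
  rw [Fintype.sum_prod_type, Finset.sum_eq_single i]
  · simp [nw]
  · intro b _ hb; simp [nw, hb]
  · simp

theorem sum_hw (s : Fin 8 × Fin 2 →₀ ℕ) :
    ∑ p, (s p : k) * (hw p : k) = ((∑ i, ((s (i, 0) : ℤ) - s (i, 1)) : ℤ) : k) := by
  rw [Fintype.sum_prod_type]
  push_cast
  refine Finset.sum_congr rfl fun i _ => ?_
  simp [hw, sub_eq_add_neg]

theorem nw_iff [CharZero k] (d : ℕ) (f : MvPolynomial (Fin 8 × Fin 2) k) :
    (∀ i, dDiag k (fun p => (nw i p : k)) f = (d : k) • f) ↔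
    ∀ s, coeff s f ≠ 0 → ∀ i, s (i, 0) + s (i, 1) = d := by
  simp only [dDiag_eq_iff, sum_nw, Nat.cast_inj]
  tauto

theorem mem_Wt_iff [CharZero k] (d : ℕ) (m : ℤ) (f : MvPolynomial (Fin 8 × Fin 2) k) :
    f ∈ Wt k d m ↔ ∀ s, coeff s f ≠ 0 → s ∈ expSet d m := by
  rw [mem_Wt, nw_iff, dDiag_eq_iff]
  simp only [sum_hw, Int.cast_inj, expSet, Set.mem_ofPred_eq]
  grind

theorem multihom_iff [CharZero k] (d : ℕ) (f : MvPolynomial (Fin 8 × Fin 2) k) :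
    f ∈ weightedHomogeneousSubmodule k (fun p : Fin 8 × Fin 2 => Pi.single p.1 1)
      (fun _ : Fin 8 => d) ↔ (∀ i, dDiag k (fun p => (nw i p : k)) f = (d : k) • f) := by
  rw [nw_iff, mem_weightedHomogeneousSubmodule, IsWeightedHomogeneous]
  refine forall_congr' fun s => ?_
  refine imp_congr_right fun _ => ?_
  rw [funext_iff]
  refine forall_congr' fun i => ?_
  have : (Finsupp.weight (fun p : Fin 8 × Fin 2 => (Pi.single p.1 1 : Fin 8 → ℕ)) s) i =
      s (i, 0) + s (i, 1) := by
    rw [Finsupp.weight_apply, Finsupp.sum_fintype _ _ (by simp), Finset.sum_apply,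
      Fintype.sum_prod_type, Finset.sum_eq_single i]
    · simp
    · intro b _ hb; simp [hb.symm]
    · simp
  rw [this]

theorem comm_EF (f : MvPolynomial (Fin 8 × Fin 2) k) :
    dNil k 0 1 (dNil k 1 0 f) - dNil k 1 0 (dNil k 0 1 f) = dDiag k (fun p => (hw p : k)) f := by
  have : ⁅dNil k 0 1, dNil k 1 0⁆ = dDiag k (fun p => (hw p : k)) := by
    apply derivation_ext
    rintro ⟨i, a⟩
    rw [Derivation.commutator_apply]
    fin_cases a <;> simp [dNil, dDiag, hw, mkDerivation_X]
  rw [← this, Derivation.commutator_apply]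

theorem comm_HE (f : MvPolynomial (Fin 8 × Fin 2) k) :
    dDiag k (fun p => (hw p : k)) (dNil k 0 1 f) - dNil k 0 1 (dDiag k (fun p => (hw p : k)) f) =
      (2 : k) • dNil k 0 1 f := by
  have : ⁅dDiag k (fun p => (hw p : k)), dNil k 0 1⁆ = (2 : k) • dNil k 0 1 := by
    apply derivation_ext
    rintro ⟨i, a⟩
    rw [Derivation.commutator_apply]
    fin_cases a <;> simp [dNil, dDiag, hw, mkDerivation_X, two_smul]
  rw [← Derivation.smul_apply, ← this, Derivation.commutator_apply]

theorem comm_HF (f : MvPolynomial (Fin 8 × Fin 2) k) :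
    dDiag k (fun p => (hw p : k)) (dNil k 1 0 f) - dNil k 1 0 (dDiag k (fun p => (hw p : k)) f) =
      (-2 : k) • dNil k 1 0 f := by
  have : ⁅dDiag k (fun p => (hw p : k)), dNil k 1 0⁆ = (-2 : k) • dNil k 1 0 := by
    apply derivation_ext
    rintro ⟨i, a⟩
    rw [Derivation.commutator_apply]
    fin_cases a <;> simp [dNil, dDiag, hw, mkDerivation_X, two_smul]
    ring
  rw [← Derivation.smul_apply, ← this, Derivation.commutator_apply]

theorem comm_NE (i : Fin 8) (a b : Fin 2) (f : MvPolynomial (Fin 8 × Fin 2) k) :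
    dDiag k (fun p => (nw i p : k)) (dNil k a b f) =
      dNil k a b (dDiag k (fun p => (nw i p : k)) f) := by
  have : ⁅dDiag k (fun p => (nw i p : k)), dNil k a b⁆ = 0 := by
    apply derivation_ext
    rintro ⟨j, c⟩
    rw [Derivation.commutator_apply]
    by_cases h : c = b <;> by_cases h' : j = i <;> simp [dNil, dDiag, nw, mkDerivation_X, h, h']
  rw [← sub_eq_zero, ← Derivation.commutator_apply, this, Derivation.zero_apply]

theorem E_mem (d : ℕ) (m : ℤ) (f) (hf : f ∈ Wt k d m) : dNil k 0 1 f ∈ Wt k d (m + 2) := by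
  rw [mem_Wt] at *
  refine ⟨fun i => by rw [comm_NE, hf.1, Derivation.map_smul], ?_⟩
  rw [sub_eq_iff_eq_add.mp (comm_HE k f), hf.2, Derivation.map_smul, ← add_smul]
  push_cast; rw [add_comm]

theorem F_mem (d : ℕ) (m : ℤ) (f) (hf : f ∈ Wt k d m) : dNil k 1 0 f ∈ Wt k d (m - 2) := by
  rw [mem_Wt] at *
  refine ⟨fun i => by rw [comm_NE, hf.1, Derivation.map_smul], ?_⟩
  rw [sub_eq_iff_eq_add.mp (comm_HF k f), hf.2, Derivation.map_smul, ← add_smul]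
  push_cast; rw [neg_add_eq_sub]

theorem EF_Wt (d : ℕ) (m : ℤ) (f) (hf : f ∈ Wt k d m) :
    dNil k 0 1 (dNil k 1 0 f) = dNil k 1 0 (dNil k 0 1 f) + (m : k) • f := by
  rw [← hf.2, ← comm_EF]; ring

theorem expSet_bound (d : ℕ) (m : ℤ) (s) (hs : s ∈ expSet d m) : |m| ≤ 8 * d := by
  obtain ⟨h1, h2⟩ := hs
  rw [← h2]
  refine (Finset.abs_sum_le_sum_abs _ _).trans ?_
  refine (Finset.sum_le_card_nsmul _ _ (d : ℤ) ?_).trans (by simp)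
  intro i _
  have := h1 i
  rw [abs_le]; constructor <;> omega

theorem Wt_zero [CharZero k] (d : ℕ) (m : ℤ) (hm : 8 * (d : ℤ) < |m|) (f) (hf : f ∈ Wt k d m) :
    f = 0 := by
  ext s
  rw [coeff_zero]
  by_contra h
  exact absurd (expSet_bound d m s ((mem_Wt_iff k d m f).1 hf s h)) (by omega)

theorem iter_mem {V : Type*} [AddCommGroup V] [Module k V] (E : V →ₗ[k] V) (W : ℤ → Submodule k V)
    (e : ℤ) (hE : ∀ m, ∀ v ∈ W m, E v ∈ W (m + e)) (m : ℤ) (v) (hv : v ∈ W m) (n : ℕ) :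
    E^[n] v ∈ W (m + e * n) := by
  induction n with
  | zero => simpa using hv
  | succ n ih =>
    rw [Function.iterate_succ_apply']
    have := hE _ _ ih
    convert this using 2
    push_cast; ring

theorem E_surj [CharZero k] (d : ℕ) (w) (hw : w ∈ Wt k d 2) : ∃ v ∈ Wt k d 0, dNil k 0 1 v = w := by
  refine sl2_surj (dNil k 0 1).toLinearMap (dNil k 1 0).toLinearMap (Wt k d) (E_mem k d) (F_mem k d)
    (EF_Wt k d) 2 (by norm_num) (8 * d) w hw ?_
  refine Wt_zero k d _ ?_ _ (iter_mem k (dNil k 0 1).toLinearMap (Wt k d) 2 (E_mem k d) 2 w hw (8 * d))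
  rw [abs_of_nonneg (by positivity)]; push_cast; omega

theorem F_of_E [CharZero k] (d : ℕ) (f) (hf : f ∈ Wt k d 0) (h : dNil k 0 1 f = 0) :
    dNil k 1 0 f = 0 := by
  have h1 := F_mem k d 0 f hf
  have h2 : dNil k 0 1 (dNil k 1 0 f) = 0 := by rw [EF_Wt k d 0 f hf, h]; simp
  refine sl2_inj (dNil k 1 0).toLinearMap (dNil k 0 1).toLinearMap (fun m => Wt k d (-m)) ?_ ?_
    2 (by norm_num) (dNil k 1 0 f) h1 h2 (8 * d) ?_
  · intro m v hv
    have := F_mem k d _ v hv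
    rwa [show -m - 2 = -(m + 2) by ring] at this
  · intro m v hv
    have := EF_Wt k d _ v hv
    change dNil k 1 0 (dNil k 0 1 v) = dNil k 0 1 (dNil k 1 0 v) + (m : k) • v
    rw [this]; simp
  · refine Wt_zero k d _ ?_ _ (iter_mem k (dNil k 1 0).toLinearMap (Wt k d) (-2) (fun m v hv => F_mem k d m v hv) _ _ h1 (8 * d))
    rw [abs_of_nonpos (by push_cast; omega)]; push_cast; omega

theorem finrank_Wt [CharZero k] (d : ℕ) (m : ℤ) :
    Module.finrank k (Wt k d m) = Nat.card (expSet d m) := by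
  have : Wt k d m = AddMonoidAlgebra.supported k k (expSet d m) := by
    ext f
    rw [mem_Wt_iff, AddMonoidAlgebra.mem_supported]
    simp only [Set.subset_def, SetLike.mem_coe, Finsupp.mem_support_iff]
    rfl
  rw [this, (AddMonoidAlgebra.supportedEquivFinsupp (R := k) (S := k) (expSet d m)).finrank_eq]
  rw [Module.finrank_eq_nat_card_basis (Finsupp.basisSingleOne)]

/-- Exponents as vectors. -/
noncomputable def expEquiv (d : ℕ) (m : ℤ) (j : ℕ) (hj : 2 * (j : ℤ) = 8 * d + m) : expSet d m ≃
    ((Fintype.piFinset fun _ : Fin 8 => Finset.range (d + 1)).filter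
      fun a => ∑ i, a i = j) where
  toFun s := ⟨fun i => s.1 (i, 0), by
    obtain ⟨s, h1, h2⟩ := s
    simp only [Finset.mem_filter, Fintype.mem_piFinset, Finset.mem_range]
    refine ⟨fun i => by have := h1 i; omega, ?_⟩
    have h3 : ∀ i, ((s (i, 0) : ℤ) - s (i, 1)) = 2 * s (i, 0) - d := fun i => by
      have := h1 i; omega
    simp only [h3, Finset.sum_sub_distrib, ← Finset.mul_sum] at h2
    simp at h2
    zify; omega⟩
  invFun a := ⟨Finsupp.equivFunOnFinite.symm fun p => if p.2 = 0 then a.1 p.1 else d - a.1 p.1, by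
    obtain ⟨a, ha⟩ := a
    simp only [Finset.mem_filter, Fintype.mem_piFinset, Finset.mem_range] at ha
    obtain ⟨h1, h2⟩ := ha
    refine ⟨fun i => by have := h1 i; simp; omega, ?_⟩
    have h3 : ∀ i, ((a i : ℤ) - ((d - a i : ℕ) : ℤ)) = 2 * a i - d := fun i => by
      have := h1 i; omega
    simp only [Finsupp.equivFunOnFinite_symm_apply_apply, if_true, one_ne_zero, if_false, h3, Finset.sum_sub_distrib, ← Finset.mul_sum]
    zify at h2
    rw [h2]; simp; omega⟩
  left_inv := by
    rintro ⟨s, h1, h2⟩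
    ext ⟨i, b⟩
    have := h1 i
    fin_cases b <;> simp
    omega
  right_inv := by
    rintro ⟨a, ha⟩
    ext i
    simp

theorem card_expSet (d : ℕ) (m : ℤ) (j : ℕ) (hj : 2 * (j : ℤ) = 8 * d + m) :
    Nat.card (expSet d m) = ((Fintype.piFinset fun _ : Fin 8 => Finset.range (d + 1)).filter
      fun a => ∑ i, a i = j).card := by
  rw [Nat.card_congr (expEquiv d m j hj), Nat.card_eq_fintype_card, Fintype.card_coe]

theorem finite_Wt [CharZero k] (d : ℕ) : Module.Finite k (Wt k d 0) := by
  have : Wt k d 0 = AddMonoidAlgebra.supported k k (expSet d 0) := by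
    ext f
    rw [mem_Wt_iff, AddMonoidAlgebra.mem_supported]
    simp only [Set.subset_def, SetLike.mem_coe, Finsupp.mem_support_iff]
    rfl
  rw [this]
  have : Finite (expSet d 0) := Finite.of_equiv _ (expEquiv d 0 (4 * d) (by push_cast; ring)).symm
  exact Module.Finite.equiv (AddMonoidAlgebra.supportedEquivFinsupp (R := k) (S := k) (expSet d 0)).symm

theorem finrank_ker [CharZero k] (d : ℕ) :
    Module.finrank k ↥(Wt k d 0 ⊓ LinearMap.ker (dNil k 0 1).toLinearMap) +
      Module.finrank k (Wt k d 2) = Module.finrank k (Wt k d 0) := by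
  have := finite_Wt k d
  let L : Wt k d 0 →ₗ[k] Wt k d 2 := LinearMap.restrict (dNil k 0 1).toLinearMap (E_mem k d 0)
  have hL : LinearMap.range L = ⊤ := by
    rw [LinearMap.range_eq_top]
    rintro ⟨w, hw⟩
    obtain ⟨v, hv, h⟩ := E_surj k d w hw
    exact ⟨⟨v, hv⟩, Subtype.ext h⟩
  have h := L.finrank_range_add_finrank_ker
  rw [hL, finrank_top] at h
  rw [← h, add_comm]
  congr 1
  have hk : LinearMap.ker L = (Wt k d 0 ⊓ LinearMap.ker (dNil k 0 1).toLinearMap).submoduleOf (Wt k d 0) := by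
    ext ⟨v, hv⟩
    rw [LinearMap.mem_ker, Submodule.submoduleOf, Submodule.mem_comap, Submodule.mem_inf]
    exact Subtype.ext_iff.trans ⟨fun h => ⟨hv, h⟩, fun h => h.2⟩
  rw [hk]
  exact (Submodule.submoduleOfEquivOfLe inf_le_left).finrank_eq.symm

end Derivs

section Invariance
variable (k : Type*) [Field k]

/-- Universal transvection. -/
noncomputable def phi (a b : Fin 2) : MvPolynomial (Fin 8 × Fin 2) k →ₐ[k]
    Polynomial (MvPolynomial (Fin 8 × Fin 2) k) :=
  aeval fun p => if p.2 = b then Polynomial.C (X p) + Polynomial.X * Polynomial.C (X (p.1, a))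
    else Polynomial.C (X p)

theorem phi_C (a b : Fin 2) (r : k) : phi k a b (C r) = Polynomial.C (C r) := by
  rw [phi, aeval_C]; rfl

theorem derivative_phi (a b : Fin 2) (hab : a ≠ b) (f) :
    Polynomial.derivative (phi k a b f) = phi k a b (dNil k a b f) := by
  induction f using MvPolynomial.induction_on with
  | C r => rw [phi_C, Polynomial.derivative_C, derivation_C, map_zero]
  | add p q hp hq => simp only [map_add, hp, hq]
  | mul_X p n hp =>
    rw [map_mul, Polynomial.derivative_mul, hp, Derivation.leibniz]
    simp only [smul_eq_mul, map_add, map_mul]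
    have : Polynomial.derivative (phi k a b (X n)) = phi k a b (dNil k a b (X n)) := by
      rw [dNil, mkDerivation_X, phi, aeval_X]
      split_ifs with h
      · simp [hab]
      · simp
    rw [this]; ring

theorem eval_phi (a b : Fin 2) (hab : a ≠ b) (s : k) (f) :
    Polynomial.eval (C s) (phi k a b f) = sl2Sub (Matrix.transvection b a s) f := by
  induction f using MvPolynomial.induction_on with
  | C r => rw [phi_C, Polynomial.eval_C, sl2Sub, aeval_C]; rfl
  | add p q hp hq => simp only [map_add, Polynomial.eval_add, hp, hq]
  | mul_X p n hp =>
    rw [map_mul, Polynomial.eval_mul, hp, map_mul]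
    congr 1
    obtain ⟨i, c⟩ := n
    rw [phi, aeval_X, sl2Sub, aeval_X]
    fin_cases a <;> fin_cases b <;> fin_cases c <;>
      simp_all [Matrix.transvection, Matrix.single, Matrix.one_apply, add_comm] <;> exact mul_comm _ _

theorem phi_eval_zero (a b : Fin 2) (hab : a ≠ b) (f) :
    Polynomial.eval 0 (phi k a b f) = f := by
  have := eval_phi k a b hab 0 f
  rw [C_0] at this
  rw [this, Matrix.transvection_zero, sl2Sub]
  have h : (fun p : Fin 8 × Fin 2 => ∑ c : Fin 2, C ((1 : Matrix (Fin 2) (Fin 2) k) p.2 c) *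
      X (p.1, c)) = X := by
    funext ⟨i, c⟩
    fin_cases c <;> simp [Matrix.one_apply]
  rw [h, aeval_X_left_apply]

theorem inv_iff [CharZero k] (a b : Fin 2) (hab : a ≠ b) (f) :
    (∀ s : k, sl2Sub (Matrix.transvection b a s) f = f) ↔ dNil k a b f = 0 := by
  constructor
  · intro h
    have h1 : phi k a b f = Polynomial.C f := by
      apply Polynomial.eq_of_infinite_eval_eq
      refine (Set.infinite_range_of_injective (C_injective (Fin 8 × Fin 2) k)).mono ?_
      rintro _ ⟨s, rfl⟩
      change Polynomial.eval _ _ = Polynomial.eval _ _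
      rw [eval_phi k a b hab, h, Polynomial.eval_C]
    rw [← phi_eval_zero k a b hab (dNil k a b f), ← derivative_phi k a b hab, h1]
    simp
  · intro h s
    have h1 := derivative_phi k a b hab f
    rw [h, map_zero] at h1
    have h2 := Polynomial.eq_C_of_derivative_eq_zero h1
    have h3 := phi_eval_zero k a b hab f
    rw [h2, Polynomial.eval_C] at h3
    rw [← eval_phi k a b hab, h2, Polynomial.eval_C, h3]

theorem sl2Sub_mul (g h : Matrix (Fin 2) (Fin 2) k) (f) :
    sl2Sub (g * h) f = sl2Sub h (sl2Sub g f) := by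
  have : sl2Sub (g * h) = (sl2Sub h).comp (sl2Sub g) := by
    apply MvPolynomial.algHom_ext
    rintro ⟨i, c⟩
    simp [sl2Sub, Matrix.mul_apply, Fin.sum_univ_two, algebraMap_eq]
    ring
  rw [this]; rfl

theorem inv_of_transvections (f)
    (h01 : ∀ s : k, sl2Sub (Matrix.transvection (0 : Fin 2) 1 s) f = f)
    (h10 : ∀ s : k, sl2Sub (Matrix.transvection (1 : Fin 2) 0 s) f = f)
    (g : Matrix (Fin 2) (Fin 2) k) (hg : g.det = 1) : sl2Sub g f = f := by
  have key : ∀ g : Matrix (Fin 2) (Fin 2) k, g.det = 1 → g 1 0 ≠ 0 → sl2Sub g f = f := by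
    intro g hg hc
    rw [Matrix.det_fin_two] at hg
    have : g = Matrix.transvection (0 : Fin 2) 1 ((g 0 0 - 1) / g 1 0) *
        Matrix.transvection (1 : Fin 2) 0 (g 1 0) *
        Matrix.transvection (0 : Fin 2) 1 ((g 1 1 - 1) / g 1 0) := by
      ext i j
      fin_cases i <;> fin_cases j <;>
        simp [Matrix.transvection, Matrix.mul_apply, Matrix.single, Fin.sum_univ_two,
          Matrix.one_apply] <;> field_simp
      · ring
      · linear_combination -hg
      · ring
    rw [this, sl2Sub_mul, sl2Sub_mul, h01, h10, h01]
  by_cases hc : g 1 0 = 0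
  · have h1 := key (Matrix.transvection (1 : Fin 2) 0 1 * g) (by
      rw [Matrix.det_mul, hg, Matrix.det_transvection_of_ne _ _ (by decide), one_mul]) (by
      rw [Matrix.det_fin_two, hc] at hg
      have : g 0 0 ≠ 0 := by rintro h; simp [h] at hg
      simpa [Matrix.transvection, Matrix.mul_apply, Matrix.single, Fin.sum_univ_two,
          Matrix.one_apply, hc] using this)
    rwa [sl2Sub_mul, h10] at h1
  · exact key g hg hc

theorem invariants_eq [CharZero k] (d : ℕ) :
    invariants8 k d = Wt k d 0 ⊓ LinearMap.ker (dNil k 0 1).toLinearMap := by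
  ext f
  rw [invariants8, Submodule.mem_inf, Submodule.mem_inf, Submodule.mem_iInf, multihom_iff,
    LinearMap.mem_ker]
  change (∀ g : Matrix.SpecialLinearGroup (Fin 2) k,
    sl2Sub (g : Matrix (Fin 2) (Fin 2) k) f = f) ∧ _ ↔ _ ∧ dNil k 0 1 f = 0
  constructor
  · rintro ⟨h1, h2⟩
    have hE : dNil k 0 1 f = 0 := (inv_iff k 0 1 (by decide) f).1 fun s =>
      h1 ⟨Matrix.transvection 1 0 s, Matrix.det_transvection_of_ne _ _ (by decide) s⟩
    have hF : dNil k 1 0 f = 0 := (inv_iff k 1 0 (by decide) f).1 fun s =>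
      h1 ⟨Matrix.transvection 0 1 s, Matrix.det_transvection_of_ne _ _ (by decide) s⟩
    refine ⟨⟨h2, ?_⟩, hE⟩
    rw [← comm_EF, hE, hF]; simp
  · rintro ⟨hW, hE⟩
    refine ⟨fun g => ?_, hW.1⟩
    have hF := F_of_E k d f hW hE
    exact inv_of_transvections k f ((inv_iff k 1 0 (by decide) f).2 hF)
      ((inv_iff k 0 1 (by decide) f).2 hE) _ g.2

theorem hilbert_aux [CharZero k] (d : ℕ) : 3 * Module.finrank k ↥(invariants8 k d)
        = d ^ 5 + 5 * d ^ 4 + 11 * d ^ 3 + 13 * d ^ 2 + 9 * d + 3 := by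
  have h := finrank_ker k d
  rw [← invariants_eq, finrank_Wt, finrank_Wt, card_expSet d 0 (4 * d) (by push_cast; ring),
    card_expSet d 2 (4 * d + 1) (by push_cast; ring)] at h
  have h2 := count_diff d
  rw [← h] at h2
  push_cast at h2
  zify
  rw [← h2]; ring

end Invariance

/-- The Hilbert function of the ring of `SL(2)`-invariants of 8 points on
`P¹` is `f(d) = (d⁵ + 5 d⁴ + 11 d³ + 13 d² + 9 d + 3)/3`, and the Hilbert series is
`(1 + 8 t + 22 t² + 8 t³ + t⁴)/(1 − t)⁶`. -/
theorem hilbert_function_M8 {k : Type*} [Field k] [CharZero k] :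
    (∀ d : ℕ, 3 * Module.finrank k ↥(invariants8 k d)
        = d ^ 5 + 5 * d ^ 4 + 11 * d ^ 3 + 13 * d ^ 2 + 9 * d + 3) ∧
    (PowerSeries.mk (fun d : ℕ => (Module.finrank k ↥(invariants8 k d) : ℤ))
        * (1 - PowerSeries.X) ^ 6
      = 1 + 8 * PowerSeries.X + 22 * PowerSeries.X ^ 2 + 8 * PowerSeries.X ^ 3
        + PowerSeries.X ^ 4) := by
  exact ⟨hilbert_aux k, series_formula _ (hilbert_aux k)⟩
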